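/- arXiv:1710.02996 — 3 statements merged into one kernel-verified Lean document; each statement's English description precedes it below -/
import Mathlib

section
/- Let u and w be finite lists of integers and let a, b be integers. Then M(u ++ [a+1, 1, b+1] ++ w) = M(u ++ [a, b] ++ w); that is, the operation of the first type, which inserts a 1 between two consecutive entries and increases both neighboring entries by 1, leaves the matrix M unchanged. -/
open Matrix

def elemMat (a : ℤ) : Matrix (Fin 2) (Fin 2) ℤ := !![a, -1; 1, 0]

/-- `M (a₁ :: ... :: aₙ)` is the product `E(aₙ) ⋯ E(a₁)` with the factor for `a₁` rightmost. -/
def M : List ℤ → Matrix (Fin 2) (Fin 2) ℤ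
  | [] => 1
  | a :: t => M t * elemMat a

/-!
Raising `a` by one multiplies `E(a) = !![a, -1; 1, 0]` on the left by the shear
`U = !![1, 1; 0, 1]`, and on the right by `L⁻¹`, where `L = !![1, 0; 1, 1]`. Since `E(1) = L * U⁻¹`,
the inserted factor cancels both shears:
`E(b + 1) * E(1) * E(a + 1) = E(b) * L⁻¹ * (L * U⁻¹) * U * E(a) = E(b) * E(a)`.
-/

section Ring

variable {R : Type*} [Ring R]

/-- The matrix of the continued fraction step `x ↦ a - 1 / x`, over an arbitrary ring;
`elemMat` is the integer case. -/
def contFracMat (a : R) : Matrix (Fin 2) (Fin 2) R := !![a, -1; 1, 0]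

/-- The product of the continued fraction matrices of a list, over an arbitrary ring. As for `M`,
the factor of the first entry is rightmost, hence the `reverse`. -/
def contFracProd (l : List R) : Matrix (Fin 2) (Fin 2) R := (l.reverse.map contFracMat).prod

theorem contFracMat_add_one_eq_shear_mul (a : R) :
    contFracMat (a + 1) = !![1, 1; 0, 1] * contFracMat a := by
  simp [contFracMat]

theorem contFracMat_add_one_eq_mul_shear (a : R) :
    contFracMat (a + 1) = contFracMat a * !![1, 0; -1, 1] := by
  simp [contFracMat]

theorem shear_mul_contFracMat_one_mul_shear :
    !![1, 0; -1, 1] * contFracMat (1 : R) * !![1, 1; 0, 1] = 1 := by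
  simp [contFracMat, Matrix.one_fin_two]

theorem contFracMat_add_one_mul_one_mul_add_one (a b : R) :
    contFracMat (b + 1) * contFracMat 1 * contFracMat (a + 1) =
      contFracMat b * contFracMat a :=
  calc
    _ = contFracMat b * (!![1, 0; -1, 1] * contFracMat 1 * !![1, 1; 0, 1]) * contFracMat a := by
      rw [contFracMat_add_one_eq_mul_shear b, contFracMat_add_one_eq_shear_mul a]
      simp only [mul_assoc]
    _ = contFracMat b * contFracMat a := by
      rw [shear_mul_contFracMat_one_mul_shear, mul_one]

theorem contFracProd_append (l₁ l₂ : List R) :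
    contFracProd (l₁ ++ l₂) = contFracProd l₂ * contFracProd l₁ := by
  simp only [contFracProd, List.reverse_append, List.map_append, List.prod_append]

theorem contFracProd_singleton (a : R) : contFracProd [a] = contFracMat a := by
  simp [contFracProd]

theorem contFracProd_add_one_one_add_one (a b : R) :
    contFracProd [a + 1, 1, b + 1] = contFracProd [a, b] := by
  simpa [contFracProd, mul_assoc] using contFracMat_add_one_mul_one_mul_add_one a b

theorem op1_preserves_M_general (u w : List R) (a b : R) :
    contFracProd (u ++ [a + 1, 1, b + 1] ++ w) = contFracProd (u ++ [a, b] ++ w) := by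
  simp only [contFracProd_append, contFracProd_add_one_one_add_one]

end Ring

theorem M_eq_contFracProd (l : List ℤ) : M l = contFracProd l := by
  induction l with
  | nil => rfl
  | cons a t ih =>
    calc
      M (a :: t) = M t * elemMat a := rfl
      _ = contFracProd t * contFracProd [a] := by
        rw [ih, contFracProd_singleton, elemMat, contFracMat]
      _ = contFracProd (a :: t) := (contFracProd_append [a] t).symm

/-- Operation of the first type leaves the matrix `M` unchanged. -/
theorem op1_preserves_M (u w : List ℤ) (a b : ℤ) :
    M (u ++ [a + 1, 1, b + 1] ++ w) = M (u ++ [a, b] ++ w) := by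
  simpa only [M_eq_contFracProd] using op1_preserves_M_general u w a b
end

section
/- Let u and w be finite lists of integers and let a', a'' be integers. Then M(u ++ [a', 1, 1, a''] ++ w) = −M(u ++ [a' + a'' − 1] ++ w); that is, the operation of the second type, which replaces an entry a by a', 1, 1, a'' with a' + a'' = a + 1, changes the sign of the matrix M. -/
open Matrix

/-! Removing an entry `1` and lowering both of its neighbours by one preserves `M`. This turns
`a', 1, 1, a''` into `a' - 1, 0, a''`. Removing an entry `0` and adding up its neighbours negates
`M`, which gives `-M` of the single entry `a' + a'' - 1`. -/

theorem elemMat_mul_elemMat_one_mul_elemMat (a b : ℤ) :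
    elemMat a * elemMat 1 * elemMat b = elemMat (a - 1) * elemMat (b - 1) := by
  simp only [elemMat, mul_fin_two]
  ring_nf

theorem elemMat_mul_elemMat_zero_mul_elemMat (a b : ℤ) :
    elemMat a * elemMat 0 * elemMat b = -elemMat (a + b) := by
  simp [elemMat, add_comm]

theorem M_append (u w : List ℤ) : M (u ++ w) = M w * M u := by
  induction u with
  | nil => simp [M]
  | cons a u ih => simp only [List.cons_append, M, ih, mul_assoc]

theorem M_singleton (a : ℤ) : M [a] = elemMat a :=
  one_mul _

theorem M_one_one_eq_neg (a b : ℤ) : M [a, 1, 1, b] = -M [a + b - 1] :=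
  calc M [a, 1, 1, b]
      = elemMat b * (elemMat 1 * elemMat 1 * elemMat a) := by simp only [M, one_mul, mul_assoc]
    _ = elemMat b * elemMat 0 * elemMat (a - 1) := by
      rw [elemMat_mul_elemMat_one_mul_elemMat, sub_self, mul_assoc]
    _ = -elemMat (b + (a - 1)) := elemMat_mul_elemMat_zero_mul_elemMat b (a - 1)
    _ = -M [a + b - 1] := by rw [M_singleton, ← add_sub_assoc, add_comm b]

/-- Operation of the second type changes the sign of the matrix `M`. -/
theorem op2_negates_M (u w : List ℤ) (a' a'' : ℤ) :
    M (u ++ [a', 1, 1, a''] ++ w) = -M (u ++ [a' + a'' - 1] ++ w) := by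
  simp only [M_append, M_one_one_eq_neg, Matrix.neg_mul, Matrix.mul_neg]
end

section
/- Suppose the sequence of positive integers (a_1, ..., a_n) is obtained from the initial sequence (1, 1, 1) by a finite sequence of moves, each move being a cyclic rotation, an operation of the first type, or an operation of the second type. If the total number of operations of the second type used is even, then M(a_1, ..., a_n) = −Id, and if it is odd, then M(a_1, ..., a_n) = Id. In particular, every such sequence is a solution of Problem I or of Problem II. -/
open Matrix

/-- `Reaches l S R l'` : `l'` is obtained from `l` by a finite sequence of moves:
cyclic rotations, exactly `S` operations of the first type (including the cyclic
position variant), and exactly `R` operations of the second type. -/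
inductive Reaches : List ℤ → ℕ → ℕ → List ℤ → Prop
  | refl (l : List ℤ) : Reaches l 0 0 l
  | rot {l : List ℤ} {S R : ℕ} (a : ℤ) (t : List ℤ) :
      Reaches l S R (a :: t) → Reaches l S R (t ++ [a])
  | op1 {l : List ℤ} {S R : ℕ} (u : List ℤ) (a b : ℤ) (w : List ℤ) :
      Reaches l S R (u ++ a :: b :: w) →
      Reaches l (S + 1) R (u ++ (a + 1) :: 1 :: (b + 1) :: w)
  | op1cyc {l : List ℤ} {S R : ℕ} (a : ℤ) (m : List ℤ) (b : ℤ) :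
      Reaches l S R (a :: (m ++ [b])) →
      Reaches l (S + 1) R ((a + 1) :: (m ++ [b + 1, 1]))
  | op2 {l : List ℤ} {S R : ℕ} (u : List ℤ) (a' a'' : ℤ) (w : List ℤ) :
      0 < a' → 0 < a'' →
      Reaches l S R (u ++ (a' + a'' - 1) :: w) →
      Reaches l S (R + 1) (u ++ a' :: 1 :: 1 :: a'' :: w)

/-!
Adding `1` to two neighbours and inserting a `1` between them does not change the product `M`,
and splitting an entry around `1, 1` negates it; both are identities between products of `elemMat`.
Since `M l` is invertible, a cyclic rotation conjugates it, and the cyclic variant of the first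
operation is the ordinary one on a rotated list. So the conjugacy class of `M` only changes by the
sign `(-1) ^ R`; since `M [1, 1, 1] = -1`, and `1` and `-1` are conjugate only to themselves, this
determines `M l`.
-/

section Conjugacy

theorem isConj_mul_comm_of_isUnit {α : Type*} [Monoid α] {a : α} (ha : IsUnit a) (b : α) :
    IsConj (b * a) (a * b) :=
  ⟨ha.unit, (mul_assoc a b a).symm⟩

variable {α : Type*} [Monoid α] [HasDistribNeg α] {a b : α}

theorem isConj_neg_neg : IsConj (-a) (-b) ↔ IsConj a b :=
  exists_congr fun _ => SemiconjBy.neg_right_iff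

theorem isConj_neg_one_right : IsConj (-1) a ↔ a = -1 := by
  rw [← isConj_neg_neg, neg_neg, isConj_one_right, neg_eq_iff_eq_neg]

end Conjugacy

theorem elemMat_add_one_mul_one_mul_add_one (a b : ℤ) :
    elemMat (a + 1) * elemMat 1 * elemMat (b + 1) = elemMat a * elemMat b := by
  simp only [elemMat, mul_fin_two]
  ring_nf

theorem elemMat_mul_one_mul_one_mul (a b : ℤ) :
    elemMat a * elemMat 1 * elemMat 1 * elemMat b = -elemMat (a + b - 1) := by
  simp only [elemMat, mul_fin_two, neg_of, neg_cons, neg_empty]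
  ring_nf

theorem det_elemMat (a : ℤ) : (elemMat a).det = 1 := by
  simp [elemMat, det_fin_two_of]

theorem det_M (l : List ℤ) : (M l).det = 1 := by
  induction l with
  | nil => exact det_one
  | cons a t ih => rw [M, det_mul, ih, det_elemMat, mul_one]

theorem isUnit_M (l : List ℤ) : IsUnit (M l) := by
  rw [isUnit_iff_isUnit_det, det_M]
  exact isUnit_one

theorem isConj_M_append_comm (u w : List ℤ) : IsConj (M (u ++ w)) (M (w ++ u)) := by
  rw [M_append, M_append]
  exact isConj_mul_comm_of_isUnit (isUnit_M u) (M w)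

theorem M_append_add_one_one_add_one (u : List ℤ) (a b : ℤ) (w : List ℤ) :
    M (u ++ (a + 1) :: 1 :: (b + 1) :: w) = M (u ++ a :: b :: w) :=
  calc
    _ = M w * (elemMat (b + 1) * elemMat 1 * elemMat (a + 1)) * M u := by
      simp only [M_append, M, mul_assoc]
    _ = M w * (elemMat b * elemMat a) * M u := by
      rw [elemMat_add_one_mul_one_mul_add_one]
    _ = _ := by
      simp only [M_append, M, mul_assoc]

theorem M_append_split_one_one (u : List ℤ) (a' a'' : ℤ) (w : List ℤ) :
    M (u ++ a' :: 1 :: 1 :: a'' :: w) = -M (u ++ (a' + a'' - 1) :: w) :=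
  calc
    _ = M w * (elemMat a'' * elemMat 1 * elemMat 1 * elemMat a') * M u := by
      simp only [M_append, M, mul_assoc]
    _ = M w * -elemMat (a' + a'' - 1) * M u := by
      rw [elemMat_mul_one_mul_one_mul, add_comm a'']
    _ = _ := by
      simp only [M_append, M, mul_neg, neg_mul]

theorem isConj_M_add_one_append_add_one_one (a : ℤ) (m : List ℤ) (b : ℤ) :
    IsConj (M (a :: (m ++ [b]))) (M ((a + 1) :: (m ++ [b + 1, 1]))) := by
  have h_left : IsConj (M (a :: (m ++ [b]))) (M (b :: a :: m)) :=
    isConj_M_append_comm (a :: m) [b]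
  have h_middle : M ((b + 1) :: 1 :: (a + 1) :: m) = M (b :: a :: m) :=
    M_append_add_one_one_add_one [] b a m
  have h_right : IsConj (M ((b + 1) :: 1 :: (a + 1) :: m)) (M ((a + 1) :: (m ++ [b + 1, 1]))) :=
    isConj_M_append_comm [b + 1, 1] ((a + 1) :: m)
  exact h_left.trans (h_middle ▸ h_right)

theorem M_one_one_one : M [1, 1, 1] = -1 := by
  decide

theorem reaches_solves_I_or_II_general {l₀ l : List ℤ} {S R : ℕ} (h : Reaches l₀ S R l) :
    IsConj ((-1) ^ R * M l₀) (M l) := by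
  induction h with
  | refl => rw [pow_zero, one_mul]
  | rot a t _ ih => exact ih.trans (isConj_M_append_comm [a] t)
  | op1 u a b w _ ih => rwa [M_append_add_one_one_add_one]
  | op1cyc a m b _ ih => exact ih.trans (isConj_M_add_one_append_add_one_one a m b)
  | op2 u a' a'' w _ _ _ ih =>
    rw [M_append_split_one_one, pow_succ', neg_one_mul, neg_mul]
    exact isConj_neg_neg.mpr ih

/-- Every sequence obtained from `(1,1,1)` by the surgery operations and rotations is a solution
of Problem II if the number of operations of the second type is even, and of Problem I if odd. -/
theorem reaches_solves_I_or_II (l : List ℤ) (S R : ℕ)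
    (h : Reaches [1, 1, 1] S R l) :
    (Even R → M l = -1) ∧ (Odd R → M l = 1) := by
  have h_conj : IsConj ((-1) ^ R * -1) (M l) := M_one_one_one ▸ reaches_solves_I_or_II_general h
  constructor <;> intro hR <;> simpa [hR.neg_one_pow, isConj_neg_one_right] using h_conj
end
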